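/- Let G be a finitely generated metabelian group with a finite relative presentation ⟨X | R⟩_{𝒮₂} in the variety of metabelian groups, and let k be the minimum, over all abelian normal subgroups A of G whose quotient G/A is abelian, of the torsion-free rank of the finitely generated abelian group G/A. Then the relative Dehn function δ̃ of this relative presentation satisfies: δ̃(n) ≼ n² if k = 0, and δ̃(n) ≼ 2^{n^{2k}} if k > 0. -/

import Mathlib

open Function

/-- The length of the reduced word representing an element of a free group. -/
noncomputable def freeNorm {X : Type*} (w : FreeGroup X) : ℕ :=
  letI := Classical.decEq X
  w.toWord.length

/-- `w` equals a product of exactly `N` conjugates of elements of `R ∪ R⁻¹`. -/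
def AreaIs {G : Type*} [Group G] (R : Set G) (w : G) (N : ℕ) : Prop :=
  ∃ r f : Fin N → G, (∀ i, r i ∈ R ∨ (r i)⁻¹ ∈ R) ∧
    w = (List.ofFn fun i => (f i)⁻¹ * r i * f i).prod

/-- The area of `w` with respect to the relators `R` is at most `N`. -/
def AreaLe {G : Type*} [Group G] (R : Set G) (w : G) (N : ℕ) : Prop :=
  ∃ N' ≤ N, AreaIs R w N'

/-- `f ≼ g` : there is `C > 0` with `f n ≤ C * g (C * n) + C * n + C` for all `n`. -/
def Dominates (f g : ℕ → ℕ) : Prop :=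
  ∃ C : ℕ, 0 < C ∧ ∀ n, f n ≤ C * g (C * n) + C * n + C

/-- `f ≈ g` : mutual domination. -/
def DehnEquiv (f g : ℕ → ℕ) : Prop := Dominates f g ∧ Dominates g f

/-- `δ` is the Dehn function of the presentation with relator set `R`. -/
def IsDehnFunctionOf {X : Type*} (R : Set (FreeGroup X)) (δ : ℕ → ℕ) : Prop :=
  ∀ n, IsLeast {N | ∀ w ∈ Subgroup.normalClosure R, freeNorm w ≤ n → AreaLe R w N} (δ n)

/-- A group is metabelian if its derived subgroup is abelian. -/
def IsMetabelian (G : Type*) [Group G] : Prop :=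
  ∀ a b : G, a ∈ commutator G → b ∈ commutator G → a * b = b * a

instance derivedSeriesNormalInst {G : Type*} [Group G] (n : ℕ) : (derivedSeries G n).Normal :=
  derivedSeries_normal G n

/-- The free metabelian group on `X`: the free group modulo its second derived subgroup. -/
abbrev FreeMetabelian (X : Type*) := FreeGroup X ⧸ derivedSeries (FreeGroup X) 2

/-- The word length of `w` in the free metabelian group is at most `n`. -/
def mNormLe {X : Type*} (w : FreeMetabelian X) (n : ℕ) : Prop :=
  ∃ v : FreeGroup X, QuotientGroup.mk' (derivedSeries (FreeGroup X) 2) v = w ∧ freeNorm v ≤ n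

/-- `δ` is the relative Dehn function (in the variety of metabelian groups) of the
relative presentation with relator set `R`. -/
def IsRelDehnFunctionOf {X : Type*} (R : Set (FreeMetabelian X)) (δ : ℕ → ℕ) : Prop :=
  ∀ n, IsLeast {N | ∀ w ∈ Subgroup.normalClosure R, mNormLe w n → AreaLe R w N} (δ n)

/-- The paper's commutator convention: `[x, y] = x⁻¹ * y⁻¹ * x * y`. -/
def pcomm {G : Type*} [Group G] (x y : G) : G := x⁻¹ * y⁻¹ * x * y

/-- A group has torsion-free rank `k` if it has a finite-index subgroup isomorphic to `ℤ^k`. -/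
def HasTFRank (Q : Type*) [Group Q] (k : ℕ) : Prop :=
  ∃ H : Subgroup Q, H.index ≠ 0 ∧ Nonempty (H ≃* Multiplicative (Fin k → ℤ))

/-- `G ⧸ A` is abelian and has torsion-free rank `j`. -/
def QuotientRankProp {G : Type*} [Group G] (A : Subgroup G) [A.Normal] (j : ℕ) : Prop :=
  (∀ x y : G ⧸ A, x * y = y * x) ∧ HasTFRank (G ⧸ A) j

/-- The set of torsion-free ranks of quotients `G ⧸ A` by abelian normal subgroups `A`
with `G ⧸ A` abelian. -/
def abelianRankSet (G : Type*) [Group G] : Set ℕ :=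
  {j | ∃ A : Subgroup G, ∃ h : A.Normal, (∀ x y : G, x ∈ A → y ∈ A → x * y = y * x) ∧
    @QuotientRankProp G _ A h j}

/-!
Let `Γ` be the free metabelian group on `X`, let `Q = G ⧸ A` be an abelian quotient of `G` of
torsion-free rank `k` with `A` abelian, and let `M` be the kernel of `Γ → Q`, so that the
commutators of elements of `M` are consequences of the relators. Lift a basis of a free abelian
subgroup of finite index in `Q`, and the inverses of its elements, to elements `s` of `Γ`. As `Γ` is
metabelian, the conjugates by monomials in `s` of finitely many elements `a` of `M` behave, up to
rewriting at polynomial cost, like the monomials of a free module over the polynomial ring `ℤ[x]` in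
`2 * k` variables.

A word of length `n` that is trivial in `Q` is a product of at most quadratically many such
conjugates, with monomials of degree `O(n)` (and degree zero if `k = 0`). If it is also trivial in
the group presented, then its vector of exponent sums lies in the submodule of relations, which has
a finite strong Gröbner basis by Dickson's lemma. Division by that basis inside the space of
polynomials of degree `O(n)`, whose dimension is `O(n ^ (2 * k))`, costs one multiplicative constant
per monomial. This gives the factor `2 ^ n ^ (2 * k)`; sorting the letters contributes only a
polynomial factor.
-/

open scoped commutatorElement

section L1Norm

variable {I J : Type*}

/-- The `ℓ¹`-norm of an integral vector. -/
noncomputable def l1Norm (f : I →₀ ℤ) : ℕ := f.sum fun _ z => z.natAbs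

@[simp]
theorem l1Norm_single (i : I) (z : ℤ) : l1Norm (Finsupp.single i z) = z.natAbs := by
  simp [l1Norm]

theorem natAbs_apply_le_l1Norm (f : I →₀ ℤ) (i : I) : (f i).natAbs ≤ l1Norm f := by
  by_cases hi : i ∈ f.support
  · exact Finset.single_le_sum (f := fun i => (f i).natAbs) (fun _ _ => Nat.zero_le _) hi
  · simp [Finsupp.notMem_support_iff.1 hi]

theorem l1Norm_add_le (f g : I →₀ ℤ) : l1Norm (f + g) ≤ l1Norm f + l1Norm g := by
  classical
  unfold l1Norm
  rw [Finsupp.sum_of_support_subset (f + g) Finsupp.support_add _ (by simp),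
    Finsupp.sum_of_support_subset f Finset.subset_union_left _ (by simp),
    Finsupp.sum_of_support_subset g Finset.subset_union_right _ (by simp),
    ← Finset.sum_add_distrib]
  exact Finset.sum_le_sum fun i _ => Int.natAbs_add_le _ _

theorem l1Norm_zsmul_le (q : ℤ) (f : I →₀ ℤ) : l1Norm (q • f) ≤ q.natAbs * l1Norm f := by
  unfold l1Norm
  rw [Finsupp.sum_of_support_subset (q • f) Finsupp.support_smul _ (by simp), Finsupp.sum,
    Finset.mul_sum]
  exact Finset.sum_le_sum fun i _ => by simp [Int.natAbs_mul]

theorem l1Norm_mapDomain {φ : I → J} (hφ : Injective φ) (f : I →₀ ℤ) :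
    l1Norm (f.mapDomain φ) = l1Norm f :=
  Finsupp.sum_mapDomain_index_inj hφ

theorem zsmul_induction {M : Type*} [AddCommGroup M] {P : M → ℕ → Prop} (zero : P 0 0)
    (add : ∀ x y m n, P x m → P y n → P (x + y) (m + n)) (neg : ∀ x n, P x n → P (-x) n)
    {x : M} (hx : P x 1) (z : ℤ) : P (z • x) z.natAbs := by
  have natural (n : ℕ) : P (n • x) n := by
    induction n with
    | zero => simpa using zero
    | succ n ih => simpa only [succ_nsmul] using add _ _ _ _ ih hx
  obtain ⟨n, rfl | rfl⟩ := z.eq_nat_or_neg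
  · simpa using natural n
  · simpa using neg _ _ (natural n)

theorem linearCombination_induction {M : Type*} [AddCommGroup M] {P : M → ℕ → Prop}
    (zero : P 0 0) (add : ∀ x y m n, P x m → P y n → P (x + y) (m + n))
    (neg : ∀ x n, P x n → P (-x) n) {v : I → M} (c : I →₀ ℤ)
    (base : ∀ i ∈ c.support, P (v i) 1) :
    P (Finsupp.linearCombination ℤ v c) (l1Norm c) := by
  classical
  suffices ∀ s ⊆ c.support, P (∑ i ∈ s, c i • v i) (∑ i ∈ s, (c i).natAbs) from
    this _ subset_rfl
  intro s
  induction s using Finset.induction_on with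
  | empty => exact fun _ => by simpa using zero
  | insert i s hi ih =>
    intro hs
    rw [Finset.insert_subset_iff] at hs
    rw [Finset.sum_insert hi, Finset.sum_insert hi]
    exact add _ _ _ _ (zsmul_induction zero add neg (base i hs.1) _) (ih hs.2)

end L1Norm

theorem exists_finite_dominating_of_wellQuasiOrdered {α : Type*} {r : α → α → Prop}
    (hr : WellQuasiOrdered r) (s : Set α) :
    ∃ t ⊆ s, t.Finite ∧ ∀ x ∈ s, ∃ y ∈ t, r y x := by
  by_contra! h
  obtain ⟨f, -, hrf⟩ := exists_seq_of_forall_finset_exists (· ∈ s) (fun y x => ¬ r y x)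
    fun t ht => h t ht t.finite_toSet
  obtain ⟨m, n, hmn, hr⟩ := hr f
  exact hrf m n hmn hr

section Groebner

variable {I E : Type*} [LinearOrder I]

/-- `i` is the leading index of `f`: the largest index at which `f` does not vanish. -/
def IsLeading (f : I →₀ ℤ) (i : I) : Prop := IsGreatest (f.support : Set I) i

namespace IsLeading

variable {f : I →₀ ℤ} {i : I}

theorem apply_ne_zero (h : IsLeading f i) : f i ≠ 0 := Finsupp.mem_support_iff.1 h.1

theorem mapDomain (h : IsLeading f i) {φ : I → I} (hφ : StrictMono φ) :
    IsLeading (f.mapDomain φ) (φ i) := by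
  classical
  rw [IsLeading, Finsupp.mapDomain_support_of_injective hφ.injective, Finset.coe_image]
  exact hφ.monotone.map_isGreatest h

end IsLeading

theorem exists_isLeading_forall_dvd (S : AddSubgroup (I →₀ ℤ)) {i : I}
    (hi : ∃ f ∈ S, IsLeading f i) :
    ∃ g ∈ S, IsLeading g i ∧ ∀ f ∈ S, IsLeading f i → g i ∣ f i := by
  let T : AddSubgroup (I →₀ ℤ) := S ⊓ (Finsupp.supported ℤ ℤ (Set.Iic i)).toAddSubgroup
  obtain ⟨a, ha⟩ := Int.subgroup_cyclic (T.map (Finsupp.applyAddHom i))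
  have mem_T {f : I →₀ ℤ} (hf : f ∈ S) (hfi : IsLeading f i) : f ∈ T :=
    ⟨hf, (Finsupp.mem_supported ℤ f).2 hfi.2⟩
  have dvd {f : I →₀ ℤ} (hf : f ∈ S) (hfi : IsLeading f i) : a ∣ f i := by
    rw [← Int.mem_zmultiples_iff, AddSubgroup.zmultiples_eq_closure, ← ha]
    exact AddSubgroup.mem_map_of_mem (Finsupp.applyAddHom i) (mem_T hf hfi)
  obtain ⟨g, hgT, rfl⟩ : a ∈ T.map (Finsupp.applyAddHom i) :=
    ha ▸ AddSubgroup.subset_closure rfl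
  obtain ⟨f, hf, hfi⟩ := hi
  have hgi : g i ≠ 0 := ne_zero_of_dvd_ne_zero hfi.apply_ne_zero (dvd hf hfi)
  exact ⟨g, hgT.1, ⟨Finsupp.mem_support_iff.2 hgi, (Finsupp.mem_supported ℤ g).1 hgT.2⟩,
    fun f hf hfi => dvd hf hfi⟩

/-- `B` is a strong Gröbner basis of the group `S ≤ ℤ^(I)`, for an action of `E` on the linearly
ordered index set `I`: every leading term of `S` is an integral multiple of a translate of a leading
term of `B`. With `I` the monomials of a free module over `ℤ[x₁, …, xₙ]`, this is the usual notion
for submodules. -/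
def IsStrongGroebnerBasis (act : E → I → I) (S : AddSubgroup (I →₀ ℤ)) (B : Set (I →₀ ℤ)) : Prop :=
  B ⊆ S ∧ ∀ f ∈ S, ∀ i, IsLeading f i → ∃ g ∈ B, ∃ e j, IsLeading g j ∧ act e j = i ∧ g j ∣ f i

theorem exists_finite_isStrongGroebnerBasis {act : E → I → I} (hact : ∀ e, StrictMono (act e))
    (hwqo : WellQuasiOrdered fun p q : I × ℕ => (∃ e, act e p.1 = q.1) ∧ p.2 ≤ q.2)
    {S : AddSubgroup (I →₀ ℤ)} (hS : ∀ f ∈ S, ∀ e, f.mapDomain (act e) ∈ S) :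
    ∃ B : Set (I →₀ ℤ), B.Finite ∧ IsStrongGroebnerBasis act S B := by
  choose! g hgS hgi hdvd using fun i => exists_isLeading_forall_dvd S (i := i)
  let L : Set I := {i | ∃ f ∈ S, IsLeading f i}
  obtain ⟨t, hts, htfin, ht⟩ :=
    exists_finite_dominating_of_wellQuasiOrdered hwqo ((fun i => (i, (g i i).natAbs)) '' L)
  refine ⟨(fun p => g p.1) '' t, htfin.image _, ?_, fun f hf i hfi => ?_⟩
  · rintro _ ⟨p, hp, rfl⟩
    obtain ⟨i, hi, rfl⟩ := hts hp
    exact hgS i hi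
  obtain ⟨p, hp, ⟨e, he⟩, hle⟩ := ht _ ⟨i, ⟨f, hf, hfi⟩, rfl⟩
  obtain ⟨j, hj, rfl⟩ := hts hp
  obtain rfl : act e j = i := he
  have value : (g j).mapDomain (act e) (act e j) = g j j :=
    Finsupp.mapDomain_apply (hact e).injective _ _
  have hdvd' : g (act e j) (act e j) ∣ g j j :=
    value ▸ hdvd _ ⟨f, hf, hfi⟩ _ (hS _ (hgS j hj) e) ((hgi j hj).mapDomain (hact e))
  have hnatAbs : (g j j).natAbs = (g (act e j) (act e j)).natAbs :=
    hle.antisymm (Nat.le_of_dvd (Int.natAbs_pos.2 (hgi j hj).apply_ne_zero)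
      (Int.natAbs_dvd_natAbs.2 hdvd'))
  exact ⟨g j, ⟨_, hp, rfl⟩, e, j, hgi j hj, rfl,
    (Int.natAbs_dvd_natAbs.1 hnatAbs.dvd).trans (hdvd _ ⟨f, hf, hfi⟩ f hf hfi)⟩

/-- The translates of the members of `B`. -/
def translates (act : E → I → I) (B : Set (I →₀ ℤ)) : Set (I →₀ ℤ) :=
  {h | ∃ g ∈ B, ∃ e, g.mapDomain (act e) = h}

namespace IsStrongGroebnerBasis

variable {act : E → I → I} {S : AddSubgroup (I →₀ ℤ)} {B : Set (I →₀ ℤ)}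

theorem translates_subset (hB : IsStrongGroebnerBasis act S B)
    (hS : ∀ f ∈ S, ∀ e, f.mapDomain (act e) ∈ S) : translates act B ⊆ S := by
  rintro _ ⟨g, hg, e, rfl⟩
  exact hS g (hB.1 hg) e

theorem exists_cancel_leading (hB : IsStrongGroebnerBasis act S B)
    (hact : ∀ e, StrictMono (act e)) {κ : ℕ} (hκ : ∀ g ∈ B, l1Norm g ≤ κ)
    {f : I →₀ ℤ} (hf : f ∈ S) {i : I} (hfi : IsLeading f i) :
    ∃ h ∈ translates act B, ∃ q : ℤ, (∀ j ∈ h.support, j ≤ i) ∧ (f - q • h) i = 0 ∧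
      q.natAbs ≤ l1Norm f ∧ l1Norm (f - q • h) ≤ l1Norm f * (κ + 1) := by
  obtain ⟨g, hg, e, j, hgj, rfl, q, hq⟩ := hB.2 f hf i hfi
  have value : g.mapDomain (act e) (act e j) = g j := Finsupp.mapDomain_apply (hact e).injective _ _
  have hqf : q.natAbs ≤ l1Norm f := by
    refine le_trans ?_ (natAbs_apply_le_l1Norm f (act e j))
    rw [hq, Int.natAbs_mul]
    exact Nat.le_mul_of_pos_left _ (Int.natAbs_pos.2 hgj.apply_ne_zero)
  refine ⟨_, ⟨g, hg, e, rfl⟩, q, (hgj.mapDomain (hact e)).2, by simp [hq, value, mul_comm], hqf, ?_⟩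
  calc l1Norm (f - q • g.mapDomain (act e))
      ≤ l1Norm f + q.natAbs * l1Norm (g.mapDomain (act e)) := by
        rw [sub_eq_add_neg, ← neg_smul, ← Int.natAbs_neg q]
        exact (l1Norm_add_le _ _).trans (by gcongr; exact l1Norm_zsmul_le _ _)
    _ ≤ l1Norm f + l1Norm f * κ := by
        rw [l1Norm_mapDomain (hact e).injective]
        gcongr
        exact hκ g hg
    _ = l1Norm f * (κ + 1) := by ring

theorem exists_linearCombination_eq (hB : IsStrongGroebnerBasis act S B)
    (hact : ∀ e, StrictMono (act e)) (hS : ∀ f ∈ S, ∀ e, f.mapDomain (act e) ∈ S) {κ : ℕ}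
    (hκ : ∀ g ∈ B, l1Norm g ≤ κ) (Ω : Finset I) (hΩ : IsLowerSet (Ω : Set I))
    {f : I →₀ ℤ} (hf : f ∈ S) (hfΩ : f.support ⊆ Ω) :
    ∃ c : (I →₀ ℤ) →₀ ℤ, (∀ h ∈ c.support, h ∈ translates act B ∧ h.support ⊆ Ω) ∧
      Finsupp.linearCombination ℤ id c = f ∧ l1Norm c ≤ l1Norm f * (κ + 2) ^ Ω.card := by
  induction Ω using Finset.induction_on_max generalizing f with
  | empty => exact ⟨0, by simp, by simp_all, by simp [l1Norm]⟩
  | insert a s has ih =>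
    have ha : a ∉ s := fun h => (has a h).false
    have hs : IsLowerSet (s : Set I) := fun x y hyx hx =>
      Finset.mem_of_mem_insert_of_ne (hΩ hyx (Finset.mem_insert_of_mem hx))
        (hyx.trans_lt (has x hx)).ne
    rw [Finset.card_insert_of_notMem ha]
    by_cases hfa : f a = 0
    · have hfs : f.support ⊆ s := (Finset.subset_insert_iff_of_notMem (by simpa using hfa)).1 hfΩ
      obtain ⟨c, hc, hcf, hcn⟩ := ih hs hf hfs
      exact ⟨c, fun h hh => ⟨(hc h hh).1, (hc h hh).2.trans (Finset.subset_insert _ _)⟩, hcf,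
        hcn.trans (by gcongr <;> omega)⟩
    have hle {x : I} (hx : x ∈ insert a s) : x ≤ a :=
      (Finset.mem_insert.1 hx).elim Eq.le fun h => (has x h).le
    have hfl : IsLeading f a := ⟨Finsupp.mem_support_iff.2 hfa, fun x hx => hle (hfΩ hx)⟩
    obtain ⟨h, hhB, q, hha, hra, hqf, hrn⟩ := hB.exists_cancel_leading hact hκ hf hfl
    have hhΩ : h.support ⊆ insert a s := fun x hx => hΩ (hha x hx) (Finset.mem_insert_self a s)
    have hrS : f - q • h ∈ S := S.sub_mem hf (S.zsmul_mem (hB.translates_subset hS hhB) q)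
    have hrs : (f - q • h).support ⊆ s := by
      refine (Finset.subset_insert_iff_of_notMem (Finsupp.notMem_support_iff.2 hra)).1
        (Finsupp.support_sub.trans ?_)
      exact Finset.union_subset hfΩ (Finsupp.support_smul.trans hhΩ)
    obtain ⟨c, hc, hcr, hcn⟩ := ih hs hrS hrs
    refine ⟨c + Finsupp.single h q, fun x hx => ?_, by simp [hcr], ?_⟩
    · rcases Finset.mem_union.1 (Finsupp.support_add hx) with hx | hx
      · exact ⟨(hc x hx).1, (hc x hx).2.trans (Finset.subset_insert _ _)⟩
      · obtain rfl := Finset.mem_singleton.1 (Finsupp.support_single_subset hx)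
        exact ⟨hhB, hhΩ⟩
    · calc l1Norm (c + Finsupp.single h q) ≤ l1Norm c + q.natAbs := by
            simpa using l1Norm_add_le c (Finsupp.single h q)
        _ ≤ l1Norm f * (κ + 1) * (κ + 2) ^ s.card + l1Norm f * (κ + 2) ^ s.card := by
            gcongr
            · exact hcn.trans (by gcongr)
            · exact hqf.trans (Nat.le_mul_of_pos_right _ (by positivity))
        _ = l1Norm f * (κ + 2) ^ (s.card + 1) := by ring

end IsStrongGroebnerBasis

end Groebner

section Monomials

variable {σ J : Type*}

/-- Multiplication by the monomial `x ^ e`, on the monomials of a free module with basis `J` over a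
polynomial ring in the variables `σ`. -/
noncomputable def shift (e : σ →₀ ℕ) (p : (σ →₀ ℕ) × J) : (σ →₀ ℕ) × J := (e + p.1, p.2)

theorem shift_injective (e : σ →₀ ℕ) : Injective (shift (J := J) e) := by
  rintro ⟨u, i⟩ ⟨v, j⟩ h
  simpa [shift] using h

variable (σ J) in
/-- The monomials of degree at most `D`. -/
def lowDegree (D : ℕ) : Set ((σ →₀ ℕ) × J) := {p | p.1.degree ≤ D}

theorem lowDegree_mono {D D' : ℕ} (h : D ≤ D') : lowDegree σ J D ⊆ lowDegree σ J D' :=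
  fun _ hp => le_trans hp h

theorem lowDegree_subset_image [Finite σ] (D : ℕ) :
    lowDegree σ J D ⊆ (fun q : (σ → Fin (D + 1)) × J =>
      (Finsupp.equivFunOnFinite.symm fun t => (q.1 t : ℕ), q.2)) '' Set.univ := by
  rintro ⟨u, j⟩ hu
  refine ⟨(fun t => ⟨u t, Nat.lt_succ_of_le ((Finsupp.le_degree t u).trans hu)⟩, j), trivial, ?_⟩
  ext <;> simp

theorem finite_lowDegree [Finite σ] [Finite J] (D : ℕ) : (lowDegree σ J D).Finite :=
  (Set.finite_univ.image _).subset (lowDegree_subset_image D)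

theorem ncard_lowDegree_le [Finite σ] [Finite J] (D : ℕ) :
    (lowDegree σ J D).ncard ≤ Nat.card J * (D + 1) ^ Nat.card σ := calc
  (lowDegree σ J D).ncard ≤ (Set.univ : Set ((σ → Fin (D + 1)) × J)).ncard :=
    (Set.ncard_le_ncard (lowDegree_subset_image D) (Set.finite_univ.image _)).trans
      (Set.ncard_image_le Set.finite_univ)
  _ = Nat.card J * (D + 1) ^ Nat.card σ := by
    simp [Set.ncard_univ, Nat.card_prod, Nat.card_fun, mul_comm]

theorem wellQuasiOrdered_shift [Finite σ] [Finite J] :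
    WellQuasiOrdered fun p q : ((σ →₀ ℕ) × J) × ℕ => (∃ e, shift e p.1 = q.1) ∧ p.2 ≤ q.2 := by
  intro f
  obtain ⟨m, n, hmn, ⟨huv, hab⟩, hij⟩ :=
    (wellQuasiOrdered_le (α := (σ →₀ ℕ) × ℕ)).prod (Finite.wellQuasiOrdered (α := J) Eq)
      fun n => (((f n).1.1, (f n).2), (f n).1.2)
  exact ⟨m, n, hmn, ⟨(f n).1.1 - (f m).1.1, Prod.ext (tsub_add_cancel_of_le huv) hij⟩, hab⟩

variable (σ J) in
theorem exists_linearOrder_monomials [Finite σ] [Finite J] :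
    ∃ _ : LinearOrder ((σ →₀ ℕ) × J), (∀ e : σ →₀ ℕ, StrictMono (shift (J := J) e)) ∧
      ∀ D, IsLowerSet (lowDegree σ J D) := by
  let _ : LinearOrder σ := LinearOrder.lift' (Finite.equivFin σ) (Equiv.injective _)
  let _ : LinearOrder J := LinearOrder.lift' (Finite.equivFin J) (Equiv.injective _)
  let key (p : (σ →₀ ℕ) × J) : DegLex (σ →₀ ℕ) ×ₗ J := toLex (toDegLex p.1, p.2)
  have key_injective : Injective key := by
    rintro ⟨u, i⟩ ⟨v, j⟩ h
    simpa [key] using h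
  refine ⟨LinearOrder.lift' key key_injective, fun e p q hpq => ?_, fun D p q hqp hp => ?_⟩
  · change key (shift e p) < key (shift e q)
    have hpq : key p < key q := hpq
    rw [Prod.Lex.toLex_lt_toLex] at hpq ⊢
    exact hpq.imp (fun h => add_lt_add_right (α := DegLex (σ →₀ ℕ)) h (toDegLex e))
      (And.imp_left (congrArg (toDegLex e + ·)))
  · have hqp : key q ≤ key p := hqp
    exact (Finsupp.DegLex.monotone_degree (Prod.Lex.monotone_fst _ _ hqp)).trans hp

theorem exists_finite_linearCombination_translates [Finite σ] [Finite J]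
    {S : AddSubgroup ((σ →₀ ℕ) × J →₀ ℤ)} (hS : ∀ f ∈ S, ∀ e, f.mapDomain (shift e) ∈ S) :
    ∃ B ⊆ (S : Set ((σ →₀ ℕ) × J →₀ ℤ)), B.Finite ∧ ∃ K > 0, ∀ D, ∀ f ∈ S,
      (f.support : Set ((σ →₀ ℕ) × J)) ⊆ lowDegree σ J D →
      ∃ c : ((σ →₀ ℕ) × J →₀ ℤ) →₀ ℤ,
        (∀ h ∈ c.support, h ∈ translates shift B ∧
          (h.support : Set ((σ →₀ ℕ) × J)) ⊆ lowDegree σ J D) ∧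
        Finsupp.linearCombination ℤ id c = f ∧
        l1Norm c ≤ l1Norm f * K ^ (Nat.card J * (D + 1) ^ Nat.card σ) := by
  obtain ⟨_, hshift, hlow⟩ := exists_linearOrder_monomials σ J
  obtain ⟨B, hBfin, hB⟩ := exists_finite_isStrongGroebnerBasis hshift wellQuasiOrdered_shift hS
  obtain ⟨κ, hκ⟩ := (hBfin.image l1Norm).bddAbove
  refine ⟨B, hB.1, hBfin, κ + 2, by omega, fun D f hf hfD => ?_⟩
  obtain ⟨c, hc, hcf, hcn⟩ := hB.exists_linearCombination_eq hshift hS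
    (fun g hg => hκ ⟨g, hg, rfl⟩) (finite_lowDegree D).toFinset (by simpa using hlow D) hf
    (by simpa [← Finset.coe_subset] using hfD)
  refine ⟨c, fun h hh => ⟨(hc h hh).1, ?_⟩, hcf, hcn.trans ?_⟩
  · simpa [← Finset.coe_subset] using (hc h hh).2
  · gcongr
    · omega
    · rw [← Set.ncard_eq_toFinset_card _ (finite_lowDegree D)]
      exact ncard_lowDegree_le D

end Monomials

section Area

variable {G : Type*} [Group G] {R : Set G}

open scoped Pointwise

/-- The conjugates of the elements of `R ∪ R⁻¹`; their `N`-fold products are the elements of area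
`N`. -/
def relatorConjugates (R : Set G) : Set G :=
  {x | ∃ r f : G, (r ∈ R ∨ r⁻¹ ∈ R) ∧ f⁻¹ * r * f = x}

theorem areaIs_iff_mem_pow {w : G} {N : ℕ} : AreaIs R w N ↔ w ∈ relatorConjugates R ^ N := by
  rw [Set.mem_pow]
  constructor
  · rintro ⟨r, f, hr, rfl⟩
    exact ⟨fun i => ⟨_, r i, f i, hr i, rfl⟩, rfl⟩
  · rintro ⟨x, rfl⟩
    choose r f hr hx using fun i => (x i).2
    exact ⟨r, f, hr, by simp only [hx]⟩

theorem relatorConjugates_inv : (relatorConjugates R)⁻¹ = relatorConjugates R := by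
  have inv_mem {x : G} (hx : x ∈ relatorConjugates R) : x⁻¹ ∈ relatorConjugates R := by
    obtain ⟨r, f, hr, rfl⟩ := hx
    exact ⟨r⁻¹, f, by simpa using hr.symm, by group⟩
  ext x
  exact ⟨fun hx => by simpa using inv_mem hx, inv_mem⟩

theorem normalClosure_eq_closure_relatorConjugates :
    Subgroup.normalClosure R = Subgroup.closure (relatorConjugates R) := by
  apply le_antisymm
  · refine Subgroup.closure_mono fun x hx => ?_
    obtain ⟨r, hr, hrx⟩ := Group.mem_conjugatesOfSet_iff.1 hx
    obtain ⟨c, rfl⟩ := isConj_iff.1 hrx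
    exact ⟨r, c⁻¹, Or.inl hr, by group⟩
  · rw [Subgroup.closure_le]
    rintro _ ⟨r, f, hr, rfl⟩
    have hr' : r ∈ Subgroup.normalClosure R :=
      hr.elim (fun h => Subgroup.subset_normalClosure h)
        fun h => inv_mem_iff.1 (Subgroup.subset_normalClosure h)
    simpa using Subgroup.normalClosure_normal.conj_mem r hr' f⁻¹

namespace AreaLe

theorem one (R : Set G) (N : ℕ) : AreaLe R 1 N := ⟨0, N.zero_le, areaIs_iff_mem_pow.2 (by simp)⟩

theorem mono {w : G} {M N : ℕ} (h : AreaLe R w M) (hMN : M ≤ N) : AreaLe R w N :=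
  let ⟨M', hM', hw⟩ := h
  ⟨M', hM'.trans hMN, hw⟩

theorem mul {w v : G} {M N : ℕ} (hw : AreaLe R w M) (hv : AreaLe R v N) :
    AreaLe R (w * v) (M + N) := by
  obtain ⟨M', hM', hw⟩ := hw
  obtain ⟨N', hN', hv⟩ := hv
  rw [areaIs_iff_mem_pow] at hw hv
  refine ⟨M' + N', by gcongr, areaIs_iff_mem_pow.2 ?_⟩
  rw [pow_add]
  exact Set.mul_mem_mul hw hv

theorem inv {w : G} {N : ℕ} (h : AreaLe R w N) : AreaLe R w⁻¹ N := by
  obtain ⟨N', hN', hw⟩ := h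
  rw [areaIs_iff_mem_pow] at hw
  refine ⟨N', hN', areaIs_iff_mem_pow.2 ?_⟩
  rw [← Set.mem_inv, ← inv_pow, relatorConjugates_inv]
  exact hw

theorem conj {w : G} {N : ℕ} (h : AreaLe R w N) (g : G) : AreaLe R (g * w * g⁻¹) N := by
  obtain ⟨N', hN', r, f, hr, rfl⟩ := h
  refine ⟨N', hN', r, fun i => f i * g⁻¹, hr, ?_⟩
  rw [← MulAut.conj_apply, map_list_prod, List.map_ofFn]
  congr 2
  ext i
  simp [mul_assoc]

theorem mem_normalClosure {w : G} {N : ℕ} (h : AreaLe R w N) : w ∈ Subgroup.normalClosure R := by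
  obtain ⟨N', -, hw⟩ := h
  rw [areaIs_iff_mem_pow] at hw
  rw [normalClosure_eq_closure_relatorConjugates]
  exact Subgroup.closure_pow_le (Subgroup.subset_closure hw)

end AreaLe

theorem exists_areaLe {w : G} (hw : w ∈ Subgroup.normalClosure R) : ∃ N, AreaLe R w N := by
  rw [normalClosure_eq_closure_relatorConjugates] at hw
  induction hw using Subgroup.closure_induction with
  | mem x hx => exact ⟨1, 1, le_rfl, areaIs_iff_mem_pow.2 (by simpa using hx)⟩
  | one => exact ⟨0, .one R 0⟩
  | mul x y _ _ hx hy => exact ⟨_, hx.choose_spec.mul hy.choose_spec⟩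
  | inv x _ hx => exact ⟨_, hx.choose_spec.inv⟩

theorem exists_areaLe_of_finite {ι : Type*} [Finite ι] {w : ι → G}
    (hw : ∀ i, w i ∈ Subgroup.normalClosure R) : ∃ K, ∀ i, AreaLe R (w i) K := by
  choose N hN using fun i => exists_areaLe (hw i)
  obtain ⟨K, hK⟩ := (Set.finite_range N).bddAbove
  exact ⟨K, fun i => (hN i).mono (hK ⟨i, rfl⟩)⟩

/-- `u` and `v` are equal modulo the relators `R`, at the cost of at most `c` applications. -/
def AreaNear (R : Set G) (c : ℕ) (u v : G) : Prop := AreaLe R (u * v⁻¹) c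

namespace AreaNear

variable {c c' : ℕ} {u v u' v' : G}

theorem refl (c : ℕ) (u : G) : AreaNear R c u u := by
  simpa [AreaNear] using AreaLe.one R c

theorem symm (h : AreaNear R c u v) : AreaNear R c v u := by
  simpa [AreaNear] using AreaLe.inv h

theorem mul (h : AreaNear R c u v) (h' : AreaNear R c' u' v') :
    AreaNear R (c + c') (u * u') (v * v') := by
  have hfactor : u * u' * (v * v')⁻¹ = u * v⁻¹ * (v * (u' * v'⁻¹) * v⁻¹) := by group
  rw [AreaNear, hfactor]
  exact AreaLe.mul h (AreaLe.conj h' v)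

theorem inv (h : AreaNear R c u v) : AreaNear R c u⁻¹ v⁻¹ := by
  have hfactor : u⁻¹ * v⁻¹⁻¹ = u⁻¹ * (u * v⁻¹)⁻¹ * u⁻¹⁻¹ := by group
  rw [AreaNear, hfactor]
  exact (AreaLe.inv h).conj _

theorem zpow (h : AreaNear R c u v) (ε : ℤˣ) : AreaNear R c (u ^ (ε : ℤ)) (v ^ (ε : ℤ)) := by
  obtain rfl | rfl := Int.units_eq_one_or ε
  · simpa using h
  · simpa using h.inv

theorem areaLe (h : AreaNear R c u v) (hv : AreaLe R v c') : AreaLe R u (c + c') := by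
  simpa using AreaLe.mul h hv

theorem mem_normalClosure (h : AreaNear R c u v) (hv : v ∈ Subgroup.normalClosure R) :
    u ∈ Subgroup.normalClosure R := by
  simpa using mul_mem (AreaLe.mem_normalClosure h) hv

end AreaNear

section Commutators

variable {x y z : G} {c c' : ℕ}

theorem areaLe_commutator_symm (h : AreaLe R ⁅x, y⁆ c) : AreaLe R ⁅y, x⁆ c := by
  simpa using h.inv

theorem areaLe_commutator_inv_right (h : AreaLe R ⁅x, y⁆ c) : AreaLe R ⁅x, y⁻¹⁆ c := by
  have hfactor : ⁅x, y⁻¹⁆ = y⁻¹ * ⁅x, y⁆⁻¹ * y⁻¹⁻¹ := by simp only [commutatorElement_def]; group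
  rw [hfactor]
  exact h.inv.conj _

theorem areaLe_commutator_mul_right (h : AreaLe R ⁅x, y⁆ c) (h' : AreaLe R ⁅x, z⁆ c') :
    AreaLe R ⁅x, y * z⁆ (c + c') := by
  have hfactor : ⁅x, y * z⁆ = ⁅x, y⁆ * (y * ⁅x, z⁆ * y⁻¹) := by
    simp only [commutatorElement_def]; group
  rw [hfactor]
  exact h.mul (h'.conj _)

theorem areaLe_commutator_zpow_right (h : AreaLe R ⁅x, y⁆ c) (ε : ℤˣ) :
    AreaLe R ⁅x, y ^ (ε : ℤ)⁆ c := by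
  obtain rfl | rfl := Int.units_eq_one_or ε
  · simpa using h
  · simpa using areaLe_commutator_inv_right h

end Commutators

end Area

section Words

variable {G I J : Type*} [Group G]

/-- `IsWord b T n f m` says that `m` is the value of a word of length at most `n` in the letters
`b i ^ ±1` with `i ∈ T`, in which the exponent sum of `b i` is `f i`. -/
inductive IsWord (b : I → G) (T : Set I) : ℕ → (I →₀ ℤ) → G → Prop
  | one (n : ℕ) : IsWord b T n 0 1
  | cons {n : ℕ} {f : I →₀ ℤ} {m : G} {i : I} (hi : i ∈ T) (ε : ℤˣ) (h : IsWord b T n f m) :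
      IsWord b T (n + 1) (Finsupp.single i (ε : ℤ) + f) (b i ^ (ε : ℤ) * m)

namespace IsWord

variable {b : I → G} {T T' : Set I} {n n' : ℕ} {f f' : I →₀ ℤ} {m m' : G}

theorem mono (h : IsWord b T n f m) (hT : T ⊆ T') (hn : n ≤ n') : IsWord b T' n' f m := by
  induction h generalizing n' with
  | one => exact one n'
  | cons hi ε _ ih =>
    obtain ⟨n', rfl⟩ : ∃ k, n' = k + 1 := ⟨n' - 1, by omega⟩
    exact cons (hT hi) ε (ih (by omega))

theorem letter_zpow {i : I} (hi : i ∈ T) (ε : ℤˣ) :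
    IsWord b T 1 (Finsupp.single i (ε : ℤ)) (b i ^ (ε : ℤ)) := by
  simpa using cons (b := b) hi ε (one 0)

theorem letter {i : I} (hi : i ∈ T) : IsWord b T 1 (Finsupp.single i 1) (b i) := by
  simpa using letter_zpow (b := b) hi 1

theorem mul (h : IsWord b T n f m) (h' : IsWord b T n' f' m') :
    IsWord b T (n + n') (f + f') (m * m') := by
  induction h with
  | one n => simpa using h'.mono subset_rfl (Nat.le_add_left n' n)
  | cons hi ε _ ih =>
    rw [Nat.add_right_comm, add_assoc (Finsupp.single _ _), mul_assoc]
    exact cons hi ε ih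

theorem inv (h : IsWord b T n f m) : IsWord b T n (-f) m⁻¹ := by
  induction h with
  | one n => simpa using one n
  | cons hi ε _ ih => simpa [add_comm] using ih.mul (letter_zpow hi (-ε))

theorem l1Norm_le (h : IsWord b T n f m) : l1Norm f ≤ n := by
  induction h with
  | one => simp [l1Norm]
  | cons _ ε _ ih =>
    refine (l1Norm_add_le _ _).trans ?_
    rw [l1Norm_single, Int.units_natAbs]
    omega

theorem support_subset (h : IsWord b T n f m) : (f.support : Set I) ⊆ T := by
  classical
  induction h with
  | one => simp
  | cons hi ε _ ih =>
    refine (Finset.coe_subset.2 Finsupp.support_add).trans ?_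
    rw [Finset.coe_union]
    refine Set.union_subset ?_ ih
    exact (Finset.coe_subset.2 Finsupp.support_single_subset).trans (by simpa using hi)

theorem mem {H : Subgroup G} (h : IsWord b T n f m) (hb : ∀ i ∈ T, b i ∈ H) : m ∈ H := by
  induction h with
  | one => exact H.one_mem
  | cons hi ε _ ih => exact H.mul_mem (H.zpow_mem (hb _ hi) _) ih

theorem exists_of_support_subset (b : I → G) (hf : (f.support : Set I) ⊆ T) :
    ∃ m, IsWord b T (l1Norm f) f m := by
  have hword := linearCombination_induction (P := fun f n => ∃ m, IsWord b T n f m) ⟨1, one 0⟩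
    (fun _ _ _ _ ⟨x, hx⟩ ⟨y, hy⟩ => ⟨x * y, hx.mul hy⟩) (fun _ _ ⟨x, hx⟩ => ⟨x⁻¹, hx.inv⟩)
    (v := fun i => Finsupp.single i 1) f fun i hi => ⟨b i, letter (hf hi)⟩
  simpa [Finsupp.linearCombination_apply] using hword

theorem exists_split (h : IsWord b T n f m) (ε : ℤˣ) {i : I} (hi : 0 < ε * f i) :
    ∃ n₁ n₂ f₁ f₂ m₁ m₂, IsWord b T n₁ f₁ m₁ ∧ IsWord b T n₂ f₂ m₂ ∧ n = n₁ + n₂ + 1 ∧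
      f = f₁ + Finsupp.single i (ε : ℤ) + f₂ ∧ m = m₁ * b i ^ (ε : ℤ) * m₂ := by
  classical
  induction h with
  | one => simp at hi
  | @cons n f m j hj δ h ih =>
    by_cases hδ : j = i ∧ δ = ε
    · obtain ⟨rfl, rfl⟩ := hδ
      exact ⟨0, n, 0, f, 1, m, one 0, h, by simp, by simp, by simp⟩
    have hfi : 0 < ε * f i := by
      by_cases hji : j = i
      · obtain rfl := hji
        obtain rfl : δ = -ε := Int.units_ne_iff_eq_neg.1 fun h => hδ ⟨rfl, h⟩
        simp only [Finsupp.add_apply, Finsupp.single_eq_same, mul_add, Units.val_neg, mul_neg,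
          ← Units.val_mul, Int.units_mul_self, Units.val_one] at hi
        omega
      · simpa [Finsupp.single_apply, hji] using hi
    obtain ⟨n₁, n₂, f₁, f₂, m₁, m₂, h₁, h₂, rfl, rfl, rfl⟩ := ih hfi
    exact ⟨n₁ + 1, n₂, _, f₂, _, m₂, cons hj δ h₁, h₂, by omega, by simp only [add_assoc],
      by simp only [mul_assoc]⟩

section Area

variable {R : Set G} {c : ℕ}

theorem areaLe_commutator_right (h : IsWord b T n f m) {x : G}
    (hx : ∀ i ∈ T, AreaLe R ⁅x, b i⁆ c) : AreaLe R ⁅x, m⁆ (n * c) := by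
  induction h with
  | one => simpa using AreaLe.one R _
  | cons hi ε _ ih =>
    rw [add_one_mul, add_comm]
    exact areaLe_commutator_mul_right (areaLe_commutator_zpow_right (hx _ hi) ε) ih

theorem areaLe_of_exponents_zero (h : IsWord b T n 0 m)
    (hb : ∀ i ∈ T, ∀ j ∈ T, AreaLe R ⁅b i, b j⁆ c) : AreaLe R m (n ^ 2 * c) := by
  induction n using Nat.strong_induction_on generalizing m with
  | _ n ih =>
  generalize hf : (0 : I →₀ ℤ) = f at h
  cases h with
  | one => exact .one R _
  | @cons n f m i hi ε h =>
    have hfi : 0 < (-ε : ℤˣ) * f i := by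
      have hsum : (ε : ℤ) + f i = 0 := by simpa using (DFunLike.congr_fun hf i).symm
      rw [eq_neg_of_add_eq_zero_right hsum]
      simp [← Units.val_mul]
    obtain ⟨n₁, n₂, f₁, f₂, m₁, m₂, h₁, h₂, rfl, rfl, rfl⟩ := h.exists_split (-ε) hfi
    have hword : IsWord b T (n₁ + n₂) 0 (m₁ * m₂) := by
      have hzero : f₁ + f₂ = 0 := by
        rw [hf]
        simp only [Units.val_neg, Finsupp.single_neg]
        abel
      exact hzero ▸ h₁.mul h₂
    have hcomm : AreaLe R ⁅b i ^ (ε : ℤ), m₁⁆ (n₁ * c) := h₁.areaLe_commutator_right fun j hj =>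
      areaLe_commutator_symm (areaLe_commutator_zpow_right (hb j hj i hi) ε)
    have hfactor : b i ^ (ε : ℤ) * (m₁ * b i ^ ((-ε : ℤˣ) : ℤ) * m₂) =
        ⁅b i ^ (ε : ℤ), m₁⁆ * (m₁ * m₂) := by
      simp [commutatorElement_def, mul_assoc]
    rw [hfactor]
    refine (hcomm.mul (ih _ (by omega) hword)).mono ?_
    rw [← add_mul]
    exact Nat.mul_le_mul_right c (by ring_nf; nlinarith)

theorem areaNear (h : IsWord b T n f m) (h' : IsWord b T n' f m')
    (hb : ∀ i ∈ T, ∀ j ∈ T, AreaLe R ⁅b i, b j⁆ c) : AreaNear R ((n + n') ^ 2 * c) m m' := by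
  have hzero : IsWord b T (n + n') 0 (m * m'⁻¹) := by simpa using h.mul h'.inv
  exact hzero.areaLe_of_exponents_zero hb

theorem exists_map (h : IsWord b T n f m) (ψ : G →* G) (φ : I → J) {b' : J → G} {T' : Set J}
    (hφ : ∀ i ∈ T, φ i ∈ T' ∧ AreaNear R c (ψ (b i)) (b' (φ i))) :
    ∃ m', IsWord b' T' n (f.mapDomain φ) m' ∧ AreaNear R (n * c) (ψ m) m' := by
  induction h with
  | one n => exact ⟨1, by simpa using one n, by simpa using AreaNear.refl _ 1⟩
  | @cons n f m i hi ε _ ih =>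
    obtain ⟨m', hword, hnear⟩ := ih
    refine ⟨_, by simpa [Finsupp.mapDomain_add] using cons (hφ i hi).1 ε hword, ?_⟩
    rw [map_mul, map_zpow, add_one_mul, add_comm]
    exact ((hφ i hi).2.zpow ε).mul hnear

end Area

end IsWord

/-- `m` is the value of a word of length at most `n` in the letters `b i ^ ±1` with `i ∈ T`. -/
def WordLengthLE (b : I → G) (T : Set I) (n : ℕ) (m : G) : Prop := ∃ f, IsWord b T n f m

namespace WordLengthLE

variable {b : I → G} {T T' : Set I} {n n' : ℕ} {m m' : G}

theorem one (n : ℕ) : WordLengthLE b T n 1 := ⟨0, .one n⟩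

theorem letter {i : I} (hi : i ∈ T) : WordLengthLE b T 1 (b i) := ⟨_, .letter hi⟩

theorem mono (h : WordLengthLE b T n m) (hT : T ⊆ T') (hn : n ≤ n') : WordLengthLE b T' n' m :=
  h.imp fun _ h => h.mono hT hn

theorem mul (h : WordLengthLE b T n m) (h' : WordLengthLE b T n' m') :
    WordLengthLE b T (n + n') (m * m') :=
  let ⟨_, h⟩ := h
  let ⟨_, h'⟩ := h'
  ⟨_, h.mul h'⟩

theorem inv (h : WordLengthLE b T n m) : WordLengthLE b T n m⁻¹ :=
  let ⟨_, h⟩ := h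
  ⟨_, h.inv⟩

end WordLengthLE

end Words

section OrderedMonomials

variable {σ G J : Type*} [LinearOrder σ] [Group G]

/-- The product of the `s i ^ e i`, in increasing order of `i`. -/
noncomputable def orderedMonomial (s : σ → G) (e : σ →₀ ℕ) : G :=
  ((Finsupp.toMultiset e).sort.map s).prod

@[simp]
theorem orderedMonomial_zero (s : σ → G) : orderedMonomial s 0 = 1 := by
  simp [orderedMonomial]

theorem orderedMonomial_add_single (s : σ → G) {e : σ →₀ ℕ} {j : σ} (he : ∀ i, j < i → e i = 0) :
    orderedMonomial s (e + Finsupp.single j 1) = orderedMonomial s e * s j := by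
  have hsort : (Finsupp.toMultiset (e + Finsupp.single j 1)).sort =
      (Finsupp.toMultiset e).sort ++ [j] := by
    refine List.Perm.eq_of_pairwise' (r := (· ≤ ·)) (Multiset.pairwise_sort _ _) ?_ ?_
    · refine List.pairwise_append.2 ⟨Multiset.pairwise_sort _ _, by simp, fun i hi k hk => ?_⟩
      rw [Multiset.mem_sort, Finsupp.mem_toMultiset, Finsupp.mem_support_iff] at hi
      rw [List.mem_singleton.1 hk]
      exact not_lt.1 fun hji => hi (he i hji)
    · rw [← Multiset.coe_eq_coe, ← Multiset.coe_add, Multiset.sort_eq, Multiset.sort_eq]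
      simp
  rw [orderedMonomial, hsort]
  simp [orderedMonomial]

theorem ordered_induction {P : (σ →₀ ℕ) → Prop} (zero : P 0)
    (add_single : ∀ e j, (∀ i, j < i → e i = 0) → P e → P (e + Finsupp.single j 1))
    (e : σ →₀ ℕ) : P e := by
  refine Finsupp.induction_on_max₂ e zero fun j n e he _ ih => ?_
  have vanish (n : ℕ) (i : σ) (hij : j < i) : (e + Finsupp.single j n) i = 0 := by
    have hei : i ∉ e.support := fun hi => (he i hi).asymm hij
    simpa [hij.ne] using hei
  clear * - ih vanish add_single
  induction n with
  | zero => simpa using ih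
  | succ n ihn =>
    rw [Finsupp.single_add, ← add_assoc]
    exact add_single _ j (vanish n) ihn

variable (s : σ → G) (a : J → G)

/-- The conjugate `a j ^ (x ^ e)` of `a j` by a monomial `x ^ e` in the elements `s`; modulo
relations, these letters make the normal closure of the `a j` a module over a polynomial ring. -/
noncomputable def letter (p : (σ →₀ ℕ) × J) : G :=
  orderedMonomial s p.1 * a p.2 * (orderedMonomial s p.1)⁻¹

variable {s a}

theorem wordLengthLE_orderedMonomial_mul_single (hs : ∀ i j, ⁅s i, s j⁆ ∈ Set.range a) (i : σ)
    (e : σ →₀ ℕ) : WordLengthLE (letter s a) (lowDegree σ J e.degree) e.degree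
      (orderedMonomial s e * s i * (orderedMonomial s (e + Finsupp.single i 1))⁻¹) := by
  induction e using ordered_induction with
  | zero =>
    rw [orderedMonomial_add_single s (by simp)]
    simpa using WordLengthLE.one _
  | add_single e j he ih =>
    have vanish {k l : σ} (hkl : k < l) (hjl : j < l) :
        (e + Finsupp.single k 1 : σ →₀ ℕ) l = 0 := by
      simp [he l hjl, hkl.ne]
    obtain hij | hji := lt_or_ge i j
    · obtain ⟨c, hc⟩ := hs j i
      have hfactor : orderedMonomial s e * s j * s i *
          (orderedMonomial s (e + Finsupp.single i 1) * s j)⁻¹ = letter s a (e, c) *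
            (orderedMonomial s e * s i * (orderedMonomial s (e + Finsupp.single i 1))⁻¹) := by
        rw [letter, hc, commutatorElement_def]
        group
      rw [add_right_comm, orderedMonomial_add_single s he,
        orderedMonomial_add_single s fun l hl => vanish (hij.trans hl) hl, hfactor, map_add,
        Finsupp.degree_single, add_comm _ 1]
      exact (WordLengthLE.letter (by simp [lowDegree])).mul
        (ih.mono (lowDegree_mono (by omega)) le_rfl)
    · rw [orderedMonomial_add_single s fun l hl => vanish (hji.trans_lt hl) (hji.trans_lt hl)]
      simpa using WordLengthLE.one _

theorem wordLengthLE_orderedMonomial_mul (hs : ∀ i j, ⁅s i, s j⁆ ∈ Set.range a) (e v : σ →₀ ℕ) :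
    WordLengthLE (letter s a) (lowDegree σ J (e + v).degree) (v.degree * (e + v).degree)
      (orderedMonomial s e * orderedMonomial s v * (orderedMonomial s (e + v))⁻¹) := by
  induction v using ordered_induction with
  | zero => simpa using WordLengthLE.one _
  | add_single v j hv ih =>
    have hfactor : orderedMonomial s e * (orderedMonomial s v * s j) *
        (orderedMonomial s (e + v + Finsupp.single j 1))⁻¹ =
          (orderedMonomial s e * orderedMonomial s v * (orderedMonomial s (e + v))⁻¹) *
          (orderedMonomial s (e + v) * s j *
            (orderedMonomial s (e + v + Finsupp.single j 1))⁻¹) := by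
      group
    rw [orderedMonomial_add_single s hv, ← add_assoc, hfactor]
    refine (ih.mul (wordLengthLE_orderedMonomial_mul_single hs j (e + v))).mono
      (lowDegree_mono (by simp)) ?_
    simp only [map_add, Finsupp.degree_single]
    ring_nf
    omega

end OrderedMonomials

section Metabelian

variable {σ G J : Type*} [LinearOrder σ] [Group G] {R : Set G} {s : σ → G} {a : J → G}

theorem commutatorElement_congr_left (hG : IsMetabelian G) {x y m : G}
    (hxy : Abelianization.of x = Abelianization.of y) (hm : m ∈ commutator G) :
    ⁅x, m⁆ = ⁅y, m⁆ := by
  have hmem : y⁻¹ * x ∈ commutator G := by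
    rw [← Abelianization.ker_of, MonoidHom.mem_ker, map_mul, map_inv, hxy, inv_mul_cancel]
  have hconj : x * m * x⁻¹ = y * m * y⁻¹ := calc
    x * m * x⁻¹ = y * (y⁻¹ * x * m) * (y⁻¹ * x)⁻¹ * y⁻¹ := by group
    _ = y * m * y⁻¹ := by rw [hG _ _ hmem hm]; group
  rw [commutatorElement_def, commutatorElement_def, hconj]

theorem areaLe_commutator_conj_orderedMonomial (hG : IsMetabelian G) {x y z : G} {n K : ℕ}
    (hxy : Abelianization.of x = Abelianization.of y)
    (hyz : ∀ t, AreaLe R ⁅y, ⁅s t, z⁆⁆ K) (hxz : AreaLe R ⁅x, z⁆ n) (e : σ →₀ ℕ) :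
    AreaLe R ⁅x, orderedMonomial s e * z * (orderedMonomial s e)⁻¹⁆ (n + e.degree * K) := by
  induction e using ordered_induction with
  | zero => simpa using hxz
  | add_single e t he ih =>
    rw [orderedMonomial_add_single s he]
    set v := orderedMonomial s e
    have hvxv : Abelianization.of (v⁻¹ * x * v) = Abelianization.of y := by
      simp only [map_mul, map_inv, hxy, inv_mul_cancel_comm]
    have hcomm : ⁅s t, z⁆ ∈ commutator G :=
      Subgroup.commutator_mem_commutator (Subgroup.mem_top _) (Subgroup.mem_top _)
    have hnew : AreaLe R ⁅x, v * ⁅s t, z⁆ * v⁻¹⁆ K := by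
      have hfactor : ⁅x, v * ⁅s t, z⁆ * v⁻¹⁆ = v * ⁅v⁻¹ * x * v, ⁅s t, z⁆⁆ * v⁻¹ := by
        rw [commutatorElement_def x, commutatorElement_def (v⁻¹ * x * v)]
        group
      rw [hfactor, commutatorElement_congr_left hG hvxv hcomm]
      exact (hyz t).conj v
    have hfactor : v * s t * z * (v * s t)⁻¹ = v * ⁅s t, z⁆ * v⁻¹ * (v * z * v⁻¹) := by
      rw [commutatorElement_def]
      group
    rw [hfactor]
    refine (areaLe_commutator_mul_right hnew ih).mono ?_
    simp only [map_add, Finsupp.degree_single, add_one_mul]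
    omega

/-- The commutators making the module generated by the `a i` over the ring generated by the `s t`
commutative have area at most `K`. -/
structure CommutatorsBounded (R : Set G) (s : σ → G) (a : J → G) (K : ℕ) : Prop where
  comm : ∀ i j, AreaLe R ⁅a i, a j⁆ K
  comm_comm : ∀ i t j, AreaLe R ⁅a i, ⁅s t, a j⁆⁆ K

namespace CommutatorsBounded

variable {K D n n' : ℕ} {u u' : G} {f : (σ →₀ ℕ) × J →₀ ℤ}

theorem areaLe_commutator_letter (h : CommutatorsBounded R s a K) (hG : IsMetabelian G)
    (p q : (σ →₀ ℕ) × J) :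
    AreaLe R ⁅letter s a p, letter s a q⁆ (K * (p.1.degree + q.1.degree + 1)) := by
  have hbase : AreaLe R ⁅a q.2, letter s a p⁆ (K + p.1.degree * K) :=
    areaLe_commutator_conj_orderedMonomial hG rfl (fun t => h.comm_comm _ t _) (h.comm _ _) p.1
  have hof : Abelianization.of (letter s a p) = Abelianization.of (a p.2) := by
    simp [letter]
  refine (areaLe_commutator_conj_orderedMonomial hG hof (fun t => h.comm_comm _ t _)
    (areaLe_commutator_symm hbase) q.1).mono (le_of_eq ?_)
  ring

theorem areaLe_commutator_letter_of_mem (h : CommutatorsBounded R s a K) (hG : IsMetabelian G)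
    {p q : (σ →₀ ℕ) × J} (hp : p ∈ lowDegree σ J D) (hq : q ∈ lowDegree σ J D) :
    AreaLe R ⁅letter s a p, letter s a q⁆ (K * (2 * D + 1)) := by
  refine (h.areaLe_commutator_letter hG p q).mono (Nat.mul_le_mul_left K ?_)
  rw [two_mul]
  exact Nat.add_le_add_right (Nat.add_le_add hp hq) 1

theorem areaNear (h : CommutatorsBounded R s a K) (hG : IsMetabelian G)
    (hu : IsWord (letter s a) (lowDegree σ J D) n f u)
    (hu' : IsWord (letter s a) (lowDegree σ J D) n' f u') :
    AreaNear R ((n + n') ^ 2 * (K * (2 * D + 1))) u u' :=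
  hu.areaNear hu' fun _ hp _ hq => h.areaLe_commutator_letter_of_mem hG hp hq

theorem areaNear_conj_letter (h : CommutatorsBounded R s a K) (hG : IsMetabelian G)
    (hs : ∀ i j, ⁅s i, s j⁆ ∈ Set.range a) {e : σ →₀ ℕ} {p : (σ →₀ ℕ) × J}
    (hp : shift e p ∈ lowDegree σ J D) :
    AreaNear R (D * D * (K * (2 * D + 1))) (MulAut.conj (orderedMonomial s e) (letter s a p))
      (letter s a (shift e p)) := by
  have hdeg : (e + p.1).degree ≤ D := hp
  have hpdeg : p.1.degree ≤ D := le_trans (by simp) hdeg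
  obtain ⟨g, hu⟩ := wordLengthLE_orderedMonomial_mul hs e p.1
  set u := orderedMonomial s e * orderedMonomial s p.1 * (orderedMonomial s (e + p.1))⁻¹
  have hcomm : AreaLe R ⁅letter s a (shift e p), u⁆ (D * D * (K * (2 * D + 1))) :=
    (hu.mono (lowDegree_mono hdeg) (Nat.mul_le_mul hpdeg hdeg)).areaLe_commutator_right
      fun q hq => h.areaLe_commutator_letter_of_mem hG hp hq
  have hfactor : MulAut.conj (orderedMonomial s e) (letter s a p) * (letter s a (shift e p))⁻¹ =
      ⁅u, letter s a (shift e p)⁆ := by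
    simp only [u, MulAut.conj_apply, letter, shift, commutatorElement_def]
    group
  rw [AreaNear, hfactor]
  exact areaLe_commutator_symm hcomm

theorem exists_shift (h : CommutatorsBounded R s a K) (hG : IsMetabelian G)
    (hs : ∀ i j, ⁅s i, s j⁆ ∈ Set.range a) {T : Set ((σ →₀ ℕ) × J)}
    (hu : IsWord (letter s a) T n f u) {e : σ →₀ ℕ} (hT : ∀ p ∈ T, shift e p ∈ lowDegree σ J D) :
    ∃ u', IsWord (letter s a) (lowDegree σ J D) n (f.mapDomain (shift e)) u' ∧
      AreaNear R (n * (D * D * (K * (2 * D + 1)))) (MulAut.conj (orderedMonomial s e) u) u' :=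
  hu.exists_map (MulAut.conj (orderedMonomial s e)).toMonoidHom (shift e) fun p hp =>
    ⟨hT p hp, h.areaNear_conj_letter hG hs (hT p hp)⟩

end CommutatorsBounded

end Metabelian

section RelationModule

variable {σ G J : Type*} [LinearOrder σ] [Group G] {R : Set G} {s : σ → G} {a : J → G} {K : ℕ}

variable (R s a) in
/-- The exponent sums, over the ring of integer polynomials in the variables `σ`, of the words in
the letters `a j ^ (x ^ e)` whose value is trivial modulo `R`. -/
noncomputable def relationModule : AddSubgroup ((σ →₀ ℕ) × J →₀ ℤ) where
  carrier := {f | ∃ D n u, IsWord (letter s a) (lowDegree σ J D) n f u ∧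
    u ∈ Subgroup.normalClosure R}
  zero_mem' := ⟨0, 0, 1, .one 0, one_mem _⟩
  add_mem' := by
    rintro f f' ⟨D, n, u, hword, hu⟩ ⟨D', n', u', hword', hu'⟩
    exact ⟨max D D', n + n', u * u', (hword.mono (lowDegree_mono (le_max_left _ _)) le_rfl).mul
      (hword'.mono (lowDegree_mono (le_max_right _ _)) le_rfl), mul_mem hu hu'⟩
  neg_mem' := by
    rintro f ⟨D, n, u, hword, hu⟩
    exact ⟨D, n, u⁻¹, hword.inv, inv_mem hu⟩

theorem rewriting_cost_le {n N D Z L A : ℕ} (hZ : 1 ≤ Z) (hN : N ≤ n * Z) :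
    (n + N * L) ^ 2 * (K * (2 * D + 1)) + N * (L * (D * D * (K * (2 * D + 1))) + A) ≤
      (2 * K * (1 + L) ^ 2 + 2 * L * K + A) * n ^ 2 * (D + 1) ^ 3 * Z ^ 2 := by
  have hlength : n + N * L ≤ (1 + L) * (n * Z) := by
    nlinarith [Nat.mul_le_mul_right L hN, Nat.le_mul_of_pos_right n hZ]
  have hN' : N ≤ n ^ 2 * Z ^ 2 := hN.trans (mul_pow n Z 2 ▸ Nat.le_self_pow two_ne_zero _)
  have hcomm : 2 * D + 1 ≤ 2 * (D + 1) ^ 3 := by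
    have : D + 1 ≤ (D + 1) ^ 3 := Nat.le_self_pow three_ne_zero _
    omega
  have hshift : D * D * (2 * D + 1) ≤ 2 * (D + 1) ^ 3 := by ring_nf; omega
  have hone : 1 ≤ (D + 1) ^ 3 := Nat.one_le_pow _ _ D.succ_pos
  calc (n + N * L) ^ 2 * (K * (2 * D + 1)) + N * (L * (D * D * (K * (2 * D + 1))) + A)
    _ = (n + N * L) ^ 2 * (K * (2 * D + 1)) +
        N * (L * K * (D * D * (2 * D + 1)) + A * 1) := by ring
    _ ≤ ((1 + L) * (n * Z)) ^ 2 * (K * (2 * (D + 1) ^ 3)) +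
        n ^ 2 * Z ^ 2 * (L * K * (2 * (D + 1) ^ 3) + A * (D + 1) ^ 3) := by gcongr
    _ = (2 * K * (1 + L) ^ 2 + 2 * L * K + A) * n ^ 2 * (D + 1) ^ 3 * Z ^ 2 := by ring

namespace CommutatorsBounded

variable {B : Set ((σ →₀ ℕ) × J →₀ ℤ)} {f : (σ →₀ ℕ) × J →₀ ℤ}

theorem mem_normalClosure_of_mem_relationModule (h : CommutatorsBounded R s a K)
    (hG : IsMetabelian G) (hf : f ∈ relationModule R s a) {D n : ℕ} {u : G}
    (hu : IsWord (letter s a) (lowDegree σ J D) n f u) : u ∈ Subgroup.normalClosure R := by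
  obtain ⟨D', n', u', hu', hmem⟩ := hf
  exact (h.areaNear hG (hu.mono (lowDegree_mono (le_max_left D D')) le_rfl)
    (hu'.mono (lowDegree_mono (le_max_right D D')) le_rfl)).mem_normalClosure hmem

theorem mapDomain_shift_mem_relationModule (h : CommutatorsBounded R s a K) (hG : IsMetabelian G)
    (hs : ∀ i j, ⁅s i, s j⁆ ∈ Set.range a) (hf : f ∈ relationModule R s a) (e : σ →₀ ℕ) :
    f.mapDomain (shift e) ∈ relationModule R s a := by
  obtain ⟨D, n, u, hword, hu⟩ := hf
  have hT : ∀ p ∈ lowDegree σ J D, shift e p ∈ lowDegree σ J (e.degree + D) := fun p hp => by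
    simpa [lowDegree, shift] using hp
  obtain ⟨u', hword', hnear⟩ := h.exists_shift hG hs hword hT
  exact ⟨_, n, u', hword', hnear.symm.mem_normalClosure
    (Subgroup.normalClosure_normal.conj_mem u hu _)⟩

theorem exists_words_of_finite (h : CommutatorsBounded R s a K) (hG : IsMetabelian G)
    (hB : B ⊆ relationModule R s a) (hBfin : B.Finite) :
    ∃ L A, ∀ g ∈ B, ∃ u, IsWord (letter s a) g.support L g u ∧ AreaLe R u A := by
  obtain ⟨L, hL⟩ := (hBfin.image l1Norm).bddAbove
  choose u hu using fun g : B => IsWord.exists_of_support_subset (letter s a)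
    (subset_rfl : (g.1.support : Set ((σ →₀ ℕ) × J)) ⊆ g.1.support)
  have hmem (g : B) : u g ∈ Subgroup.normalClosure R := by
    obtain ⟨D, n, v, hv, -⟩ := hB g.2
    exact h.mem_normalClosure_of_mem_relationModule hG (hB g.2)
      ((hu g).mono hv.support_subset le_rfl)
  have := hBfin.to_subtype
  obtain ⟨A, hA⟩ := exists_areaLe_of_finite hmem
  exact ⟨L, A, fun g hg => ⟨u ⟨g, hg⟩, (hu ⟨g, hg⟩).mono subset_rfl (hL ⟨g, hg, rfl⟩), hA _⟩⟩

theorem exists_words_of_translates (h : CommutatorsBounded R s a K) (hG : IsMetabelian G)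
    (hs : ∀ i j, ⁅s i, s j⁆ ∈ Set.range a) (hB : B ⊆ relationModule R s a) (hBfin : B.Finite) :
    ∃ L A, ∀ D, ∀ g ∈ translates shift B,
      (g.support : Set ((σ →₀ ℕ) × J)) ⊆ lowDegree σ J D →
      ∃ u, IsWord (letter s a) (lowDegree σ J D) L g u ∧
        AreaLe R u (L * (D * D * (K * (2 * D + 1))) + A) := by
  classical
  obtain ⟨L, A, hLA⟩ := h.exists_words_of_finite hG hB hBfin
  refine ⟨L, A, ?_⟩
  rintro D _ ⟨g, hg, e, rfl⟩ hD
  obtain ⟨u, hword, hu⟩ := hLA g hg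
  rw [Finsupp.mapDomain_support_of_injective (shift_injective e), Finset.coe_image,
    Set.image_subset_iff] at hD
  obtain ⟨u', hword', hnear⟩ := h.exists_shift hG hs hword hD
  exact ⟨u', hword', hnear.symm.areaLe (hu.conj _)⟩

theorem exists_areaLe_of_isWord [Finite σ] [Finite J] (h : CommutatorsBounded R s a K)
    (hG : IsMetabelian G) (hs : ∀ i j, ⁅s i, s j⁆ ∈ Set.range a) :
    ∃ C > 0, ∀ D n f u, IsWord (letter s a) (lowDegree σ J D) n f u →
      u ∈ Subgroup.normalClosure R →
      AreaLe R u (C * n ^ 2 * (D + 1) ^ 3 * C ^ (D + 1) ^ Nat.card σ) := by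
  obtain ⟨B, hB, hBfin, K₁, hK₁, hgen⟩ := exists_finite_linearCombination_translates
    fun f hf e => h.mapDomain_shift_mem_relationModule hG hs hf e
  obtain ⟨L, A, hLA⟩ := h.exists_words_of_translates hG hs hB hBfin
  set C₀ := 2 * K * (1 + L) ^ 2 + 2 * L * K + A
  refine ⟨C₀ + K₁ ^ (2 * Nat.card J) + 1, by omega, fun D n f u hu hmem => ?_⟩
  set E := (D + 1) ^ Nat.card σ
  obtain ⟨c, hc, hcf, hcn⟩ := hgen D f ⟨D, n, u, hu, hmem⟩ hu.support_subset
  obtain ⟨u', hu', harea⟩ : ∃ u', IsWord (letter s a) (lowDegree σ J D) (l1Norm c * L) f u' ∧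
      AreaLe R u' (l1Norm c * (L * (D * D * (K * (2 * D + 1))) + A)) := by
    rw [← hcf]
    refine linearCombination_induction (P := fun f N => ∃ u',
        IsWord (letter s a) (lowDegree σ J D) (N * L) f u' ∧
        AreaLe R u' (N * (L * (D * D * (K * (2 * D + 1))) + A))) ?_ ?_ ?_ c fun g hg => ?_
    · exact ⟨1, .one _, .one R _⟩
    · rintro f f' N N' ⟨u, hword, hu⟩ ⟨u', hword', hu'⟩
      exact ⟨u * u', add_mul N N' L ▸ hword.mul hword', add_mul N N' _ ▸ hu.mul hu'⟩
    · rintro f N ⟨u, hword, hu⟩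
      exact ⟨u⁻¹, hword.inv, hu.inv⟩
    · simpa using hLA D g (hc g hg).1 (hc g hg).2
  refine ((h.areaNear hG hu hu').areaLe harea).mono ?_
  calc (n + l1Norm c * L) ^ 2 * (K * (2 * D + 1)) +
        l1Norm c * (L * (D * D * (K * (2 * D + 1))) + A)
    _ ≤ C₀ * n ^ 2 * (D + 1) ^ 3 * (K₁ ^ (Nat.card J * E)) ^ 2 :=
      rewriting_cost_le (Nat.one_le_pow _ _ hK₁)
        (hcn.trans (Nat.mul_le_mul_right _ hu.l1Norm_le))
    _ = C₀ * n ^ 2 * (D + 1) ^ 3 * (K₁ ^ (2 * Nat.card J)) ^ E := by ring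
    _ ≤ _ := by gcongr <;> omega

end CommutatorsBounded

end RelationModule

section NormalForm

variable {σ G J : Type*} [LinearOrder σ] [Group G] {s : σ → G} {a : J → G}

theorem exists_normalForm (hs : ∀ i j, ⁅s i, s j⁆ ∈ Set.range a) {P Y : Type*} {r : P → G}
    {y : Y → G} {c₀ : P} (hr : r c₀ = 1) {V : ℕ}
    (hstep : ∀ c x, ∃ j v c', r c * y x = a j * orderedMonomial s v * r c' ∧ v.degree ≤ V)
    (w : List Y) : ∃ u e c, (w.map y).prod = u * orderedMonomial s e * r c ∧
      WordLengthLE (letter s a) (lowDegree σ J (V * w.length))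
        (w.length + (V * w.length) ^ 2) u ∧ e.degree ≤ V * w.length := by
  induction w using List.reverseRecOn with
  | nil => exact ⟨1, 0, c₀, by simp [hr], .one _, by simp⟩
  | append_singleton w x ih =>
    obtain ⟨u, e, c, hprod, hu, he⟩ := ih
    obtain ⟨j, v, c', hstep, hv⟩ := hstep c x
    rw [List.length_append, List.length_singleton]
    have hev : (e + v).degree ≤ V * (w.length + 1) := by
      rw [map_add, mul_add_one]
      exact Nat.add_le_add he hv
    have hfactor : u * orderedMonomial s e * r c * y x =
        u * letter s a (e, j) * (orderedMonomial s e * orderedMonomial s v *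
          (orderedMonomial s (e + v))⁻¹) * orderedMonomial s (e + v) * r c' := by
      rw [mul_assoc _ (r c), hstep, letter]
      group
    refine ⟨_, e + v, c', by simpa [hprod] using hfactor, ?_, hev⟩
    have hV : V * w.length ≤ V * (w.length + 1) := by gcongr; omega
    have hlength : w.length + (V * w.length) ^ 2 + 1 + V * (V * (w.length + 1)) ≤
        w.length + 1 + (V * (w.length + 1)) ^ 2 := by
      ring_nf
      omega
    exact (((hu.mono (lowDegree_mono hV) le_rfl).mul (.letter (he.trans hV))).mul
      ((wordLengthLE_orderedMonomial_mul hs e v).mono (lowDegree_mono hev)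
        (Nat.mul_le_mul hv hev))).mono subset_rfl hlength

theorem wordLengthLE_orderedMonomial_of_inverses {ι : Type*} [LinearOrder ι] {φ ψ : ι → σ}
    (hs : ∀ i j, ⁅s i, s j⁆ ∈ Set.range a) (hinv : ∀ i, s (ψ i) = (s (φ i))⁻¹) (p : ι →₀ ℕ) :
    WordLengthLE (letter s a) (lowDegree σ J (p.mapDomain φ + p.mapDomain ψ).degree)
      (2 * (p.mapDomain φ + p.mapDomain ψ).degree ^ 2)
      (orderedMonomial s (p.mapDomain φ + p.mapDomain ψ)) := by
  induction p using ordered_induction with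
  | zero => simpa using WordLengthLE.one _
  | add_single p i _ ih =>
    have hsplit : (p + Finsupp.single i 1).mapDomain φ + (p + Finsupp.single i 1).mapDomain ψ =
        p.mapDomain φ + p.mapDomain ψ + Finsupp.single (φ i) 1 + Finsupp.single (ψ i) 1 := by
      simp only [Finsupp.mapDomain_add, Finsupp.mapDomain_single]
      abel
    rw [hsplit]
    set e := p.mapDomain φ + p.mapDomain ψ
    have hφ := wordLengthLE_orderedMonomial_mul_single hs (φ i) e
    have hψ := wordLengthLE_orderedMonomial_mul_single hs (ψ i) (e + Finsupp.single (φ i) 1)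
    set m := orderedMonomial s (e + Finsupp.single (φ i) 1 + Finsupp.single (ψ i) 1)
    set m₁ := orderedMonomial s (e + Finsupp.single (φ i) 1)
    have hfactor : m = (orderedMonomial s e * s (φ i) * m₁⁻¹ * (m₁ * s (ψ i) * m⁻¹))⁻¹ *
        orderedMonomial s e := by
      rw [hinv]
      group
    rw [hfactor]
    simp only [map_add, Finsupp.degree_single] at hφ hψ ⊢
    refine (((hφ.mono ?_ le_rfl).mul (hψ.mono ?_ le_rfl)).inv.mul (ih.mono ?_ le_rfl)).mono
      subset_rfl ?_
    any_goals exact lowDegree_mono (by omega)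
    ring_nf
    omega

theorem map_orderedMonomial {Q A : Type*} [Group Q] [AddCommMonoid A] (π : G →* Q)
    (θ : Multiplicative A →* Q) {δ : σ → A} (hs : ∀ i, π (s i) = θ (.ofAdd (δ i))) (e : σ →₀ ℕ) :
    π (orderedMonomial s e) = θ (.ofAdd (Finsupp.linearCombination ℕ δ e)) := by
  induction e using ordered_induction with
  | zero => simp
  | add_single e j he ih => simp [orderedMonomial_add_single s he, ih, hs]

end NormalForm

section Generators

open Sum

variable {ι : Type*}

section SignedBasis

variable [DecidableEq ι]

variable (ι) in
/-- The standard generators of `ℤ ^ ι` and their negatives, generating it as a monoid. -/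
def signedBasis : ι ⊕ₗ ι → ι → ℤ :=
  Sum.elim (fun i => Pi.single i 1) (fun i => -Pi.single i 1) ∘ ofLex

theorem linearCombination_signedBasis_apply (e : ι ⊕ₗ ι →₀ ℕ) (i : ι) :
    Finsupp.linearCombination ℕ (signedBasis ι) e i = (e (inlₗ i) : ℤ) - e (inrₗ i) := by
  induction e using Finsupp.induction_linear with
  | zero => simp
  | add e e' he he' =>
    simp only [map_add, Pi.add_apply, he, he', Finsupp.add_apply, Nat.cast_add]
    ring
  | single j n =>
    obtain ⟨j, rfl⟩ := toLex.surjective j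
    obtain j | j := j <;> simp [signedBasis, Finsupp.single_apply, Pi.single_apply, eq_comm]

theorem exists_mapDomain_of_linearCombination_signedBasis_eq_zero {e : ι ⊕ₗ ι →₀ ℕ}
    (he : Finsupp.linearCombination ℕ (signedBasis ι) e = 0) :
    ∃ p : ι →₀ ℕ, e = p.mapDomain inlₗ + p.mapDomain inrₗ := by
  have hinl : Injective (inlₗ : ι → ι ⊕ₗ ι) := toLex.injective.comp Sum.inl_injective
  have hinr : Injective (inrₗ : ι → ι ⊕ₗ ι) := toLex.injective.comp Sum.inr_injective
  have heq (i : ι) : e (inlₗ i) = e (inrₗ i) := by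
    simpa [linearCombination_signedBasis_apply, sub_eq_zero] using congrFun he i
  refine ⟨e.comapDomain inlₗ hinl.injOn, ?_⟩
  ext j
  obtain ⟨i | i, rfl⟩ := toLex.surjective j
  · have hnotMem : inlₗ i ∉ Set.range (inrₗ : ι → ι ⊕ₗ ι) := by simp
    rw [Finsupp.add_apply, Finsupp.mapDomain_apply hinl,
      Finsupp.mapDomain_of_notMem_range _ _ hnotMem, Finsupp.comapDomain_apply, add_zero]
  · have hnotMem : inrₗ i ∉ Set.range (inlₗ : ι → ι ⊕ₗ ι) := by simp
    rw [Finsupp.add_apply, Finsupp.mapDomain_apply hinr,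
      Finsupp.mapDomain_of_notMem_range _ _ hnotMem, Finsupp.comapDomain_apply, zero_add, heq]

theorem linearCombination_signedBasis_surjective [Finite ι] :
    Surjective (Finsupp.linearCombination ℕ (signedBasis ι)) := by
  intro x
  have : Finite (ι ⊕ₗ ι) := inferInstanceAs (Finite (ι ⊕ ι))
  refine ⟨Finsupp.equivFunOnFinite.symm
    (Sum.elim (fun i => (x i).toNat) (fun i => (-x i).toNat) ∘ ofLex), ?_⟩
  ext i
  rw [linearCombination_signedBasis_apply]
  simp [inlₗ, inrₗ]

end SignedBasis

variable {G Q : Type*} [LinearOrder ι] [Group G] [CommGroup Q]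

/-- The elements `s` of `G` map to a basis of the free abelian subgroup `H` of `Q` together with
the inverses of this basis. -/
structure IsSignedBasis (π : G →* Q) (s : ι ⊕ₗ ι → G) (H : Subgroup Q) : Prop where
  inv : ∀ i, s (inrₗ i) = (s (inlₗ i))⁻¹
  mem_iff : ∀ q, q ∈ H ↔ ∃ e, π (orderedMonomial s e) = q
  exists_eq_mapDomain : ∀ e, π (orderedMonomial s e) = 1 →
    ∃ p : ι →₀ ℕ, e = p.mapDomain inlₗ + p.mapDomain inrₗ

theorem HasTFRank.exists_isSignedBasis {k : ℕ} (h : HasTFRank Q k) {π : G →* Q}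
    (hπ : Surjective π) : ∃ s : Fin k ⊕ₗ Fin k → G, ∃ H : Subgroup Q, H.FiniteIndex ∧
      IsSignedBasis π s H := by
  obtain ⟨H, hH, ⟨φ⟩⟩ := h
  set θ : Multiplicative (Fin k → ℤ) →* Q := H.subtype.comp φ.symm.toMonoidHom
  choose z hz using fun i => hπ (θ (.ofAdd (Pi.single i 1)))
  let s : Fin k ⊕ₗ Fin k → G := Sum.elim z (fun i => (z i)⁻¹) ∘ ofLex
  have hs (j : Fin k ⊕ₗ Fin k) : π (s j) = θ (.ofAdd (signedBasis (Fin k) j)) := by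
    obtain ⟨j, rfl⟩ := toLex.surjective j
    obtain j | j := j <;> simp [s, signedBasis, hz]
  refine ⟨s, H, ⟨hH⟩, fun i => rfl, fun q => ?_, fun e he => ?_⟩
  · simp only [map_orderedMonomial π θ hs]
    constructor
    · intro hq
      obtain ⟨e, he⟩ := linearCombination_signedBasis_surjective (φ ⟨q, hq⟩).toAdd
      exact ⟨e, by simp [he, θ]⟩
    · rintro ⟨e, rfl⟩
      exact (φ.symm _).2
  · rw [map_orderedMonomial π θ hs] at he
    have hθ : Injective θ := H.subtype_injective.comp φ.symm.injective
    exact exists_mapDomain_of_linearCombination_signedBasis_eq_zero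
      (ofAdd_eq_one.1 (hθ (he.trans (map_one θ).symm)))

end Generators

section QuotientOfFiniteRank

variable {ι G Q J : Type*} [LinearOrder ι] [Group G] [CommGroup Q] {π : G →* Q}
  {s : ι ⊕ₗ ι → G} {H : Subgroup Q} {a : J → G} {r : Q ⧸ H → G}

namespace IsSignedBasis

theorem wordLengthLE_of_map_eq_one (hsb : IsSignedBasis π s H) (hr : r 1 = 1)
    (hπr : ∀ c, (π (r c) : Q ⧸ H) = c) (ha : ∀ j, a j ∈ π.ker)
    (hs : ∀ i j, ⁅s i, s j⁆ ∈ Set.range a) {Y : Type*} {y : Y → G} {V : ℕ}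
    (hstep : ∀ c x, ∃ j v c', r c * y x = a j * orderedMonomial s v * r c' ∧ v.degree ≤ V)
    {w : List Y} (hw : π (w.map y).prod = 1) :
    WordLengthLE (letter s a) (lowDegree (ι ⊕ₗ ι) J (V * w.length))
      (w.length + 3 * (V * w.length) ^ 2) (w.map y).prod := by
  obtain ⟨u, e, c, hprod, hu, he⟩ := exists_normalForm hs hr hstep w
  have hπu : π u = 1 := hu.choose_spec.mem (H := π.ker) fun p _ =>
    π.normal_ker.conj_mem _ (ha p.2) _
  have hπec : π (orderedMonomial s e) * π (r c) = 1 := by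
    simpa [hprod, hπu] using hw
  have hrc : r c = 1 := by
    have hc : π (r c) ∈ H := by
      rw [eq_inv_of_mul_eq_one_right hπec]
      exact inv_mem ((hsb.mem_iff _).2 ⟨e, rfl⟩)
    rw [← hπr c, (QuotientGroup.eq_one_iff _).2 hc, hr]
  obtain ⟨p, rfl⟩ := hsb.exists_eq_mapDomain e (by simpa [hrc] using hπec)
  have hclose := wordLengthLE_orderedMonomial_of_inverses hs hsb.inv p
  rw [hprod, hrc, mul_one]
  refine (hu.mul (hclose.mono (lowDegree_mono he) le_rfl)).mono subset_rfl ?_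
  nlinarith [Nat.pow_le_pow_left he 2]

theorem exists_transversal_step (hsb : IsSignedBasis π s H) (hπ : Surjective π) {Y : Type*}
    (y : Y → G) : ∃ r : Q ⧸ H → G, r 1 = 1 ∧ (∀ c, (π (r c) : Q ⧸ H) = c) ∧
      ∀ c x, ∃ v, ∃ m ∈ π.ker, ∃ c', r c * y x = m * orderedMonomial s v * r c' := by
  classical
  set ρ : G →* Q ⧸ H := (QuotientGroup.mk' H).comp π
  have hρ : Surjective ρ := (QuotientGroup.mk'_surjective H).comp hπ
  set r : Q ⧸ H → G := update (surjInv hρ) 1 1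
  have hρr (c : Q ⧸ H) : ρ (r c) = c := by
    obtain rfl | hc := eq_or_ne c 1
    · simp [r]
    · simp [r, hc, surjInv_eq hρ]
  refine ⟨r, by simp [r], hρr, fun c x => ?_⟩
  set g := r c * y x
  have hmem : π (g * (r (ρ g))⁻¹) ∈ H := by
    rw [← QuotientGroup.eq_one_iff]
    change ρ _ = 1
    rw [map_mul, map_inv, hρr, mul_inv_cancel]
  obtain ⟨v, hv⟩ := (hsb.mem_iff _).1 hmem
  refine ⟨v, g * (r (ρ g))⁻¹ * (orderedMonomial s v)⁻¹, ?_, ρ g, by group⟩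
  rw [MonoidHom.mem_ker, map_mul _ _ (orderedMonomial s v)⁻¹, map_inv, hv, mul_inv_cancel]

end IsSignedBasis

theorem exists_commutatorsBounded {σ : Type*} [Finite σ] [Finite J] {R : Set G} {s : σ → G}
    (N : Subgroup G) [N.Normal] (hN : ∀ x ∈ N, ∀ y ∈ N, ⁅x, y⁆ ∈ Subgroup.normalClosure R)
    (ha : ∀ j, a j ∈ N) : ∃ K, CommutatorsBounded R s a K := by
  have hsa (t : σ) (j : J) : ⁅s t, a j⁆ ∈ N := by
    rw [commutatorElement_def]
    exact mul_mem (Subgroup.Normal.conj_mem ‹_› _ (ha j) _) (inv_mem (ha j))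
  obtain ⟨K, hK⟩ := exists_areaLe_of_finite fun p : J × J => hN _ (ha p.1) _ (ha p.2)
  obtain ⟨K', hK'⟩ := exists_areaLe_of_finite fun p : J × σ × J =>
    hN _ (ha p.1) _ (hsa p.2.1 p.2.2)
  exact ⟨K + K', fun i j => (hK (i, j)).mono (by omega),
    fun i t j => (hK' (i, t, j)).mono (by omega)⟩

theorem exists_areaLe_list_prod {R : Set G} {k : ℕ} (hG : IsMetabelian G) (hπ : Surjective π)
    (hR : Subgroup.normalClosure R ≤ π.ker)
    (hker : ∀ x ∈ π.ker, ∀ y ∈ π.ker, ⁅x, y⁆ ∈ Subgroup.normalClosure R) (hk : HasTFRank Q k)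
    {Y : Type*} [Finite Y] (y : Y → G) :
    ∃ C > 0, ∃ V, ∀ w : List Y, (w.map y).prod ∈ Subgroup.normalClosure R →
      AreaLe R (w.map y).prod (C * (w.length + 3 * (V * k * w.length) ^ 2) ^ 2 *
        (V * k * w.length + 1) ^ 3 * C ^ (V * k * w.length + 1) ^ (2 * k)) := by
  obtain ⟨s, H, hH, hsb⟩ := hk.exists_isSignedBasis hπ
  obtain ⟨r, hr, hπr, hstep⟩ := hsb.exists_transversal_step hπ y
  choose v m hm c' hstep using hstep
  have : Finite (Fin k ⊕ₗ Fin k) := inferInstanceAs (Finite (Fin k ⊕ Fin k))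
  let a : ((Q ⧸ H) × Y) ⊕ ((Fin k ⊕ₗ Fin k) × (Fin k ⊕ₗ Fin k)) → G :=
    Sum.elim (fun p => m p.1 p.2) (fun p => ⁅s p.1, s p.2⁆)
  have hs (i j : Fin k ⊕ₗ Fin k) : ⁅s i, s j⁆ ∈ Set.range a := ⟨.inr (i, j), rfl⟩
  have ha (j) : a j ∈ π.ker := by
    obtain p | p := j
    · exact hm p.1 p.2
    · simp [a, MonoidHom.mem_ker, map_commutatorElement, commutatorElement_eq_one_iff_mul_comm,
        mul_comm]
  obtain ⟨K, hK⟩ := exists_commutatorsBounded (s := s) π.ker hker ha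
  obtain ⟨C, hC, harea⟩ := hK.exists_areaLe_of_isWord hG hs
  obtain ⟨V, hV⟩ := (Set.finite_range fun p : (Q ⧸ H) × Y => (v p.1 p.2).degree).bddAbove
  have hdegree (c : Q ⧸ H) (x : Y) : (v c x).degree ≤ V * k := by
    obtain rfl | hk := k.eq_zero_or_pos
    · have : IsEmpty (Fin 0 ⊕ₗ Fin 0) := inferInstanceAs (IsEmpty (Fin 0 ⊕ Fin 0))
      simp [Subsingleton.elim (v c x) 0]
    · exact (hV ⟨(c, x), rfl⟩).trans (Nat.le_mul_of_pos_right V hk)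
  refine ⟨C, hC, V, fun w hw => ?_⟩
  obtain ⟨f, hword⟩ := hsb.wordLengthLE_of_map_eq_one hr hπr ha hs
    (fun c x => ⟨.inl (c, x), v c x, c' c x, hstep c x, hdegree c x⟩) (hR hw)
  have hcard : Nat.card (Fin k ⊕ₗ Fin k) = 2 * k := by
    rw [Nat.card_congr ofLex, Nat.card_sum, Nat.card_fin, two_mul]
  simpa only [hcard] using harea _ _ f _ hword hw

end QuotientOfFiniteRank

section DehnFunction

theorem dominates_of_forall_pos_le {f g : ℕ → ℕ} (hg : Monotone g) {U : ℕ}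
    (h : ∀ n, 0 < n → f n ≤ g (U * n)) : Dominates f g := by
  refine ⟨U + f 0 + 1, by omega, fun n => ?_⟩
  obtain rfl | hn := n.eq_zero_or_pos
  · omega
  · have hmono : g (U * n) ≤ g ((U + f 0 + 1) * n) := hg (by gcongr; omega)
    have hmul : g ((U + f 0 + 1) * n) ≤ (U + f 0 + 1) * g ((U + f 0 + 1) * n) :=
      Nat.le_mul_of_pos_left _ (by omega)
    exact ((h n hn).trans hmono).trans (hmul.trans (by omega))

theorem area_bound_le_two_pow (C V : ℕ) {k n : ℕ} (hk : 0 < k) (hn : 0 < n) :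
    C * (n + 3 * (V * n) ^ 2) ^ 2 * (V * n + 1) ^ 3 * C ^ (V * n + 1) ^ (2 * k) ≤
      2 ^ (16 * (C + 1) * (V + 4) * n) ^ (2 * k) := by
  set m := (V + 4) * n with hm
  have hm4 : 4 ≤ m := by nlinarith
  have hVm : V * n + 1 ≤ m := by rw [hm]; linarith
  have hlength : n + 3 * (V * n) ^ 2 ≤ m ^ 3 := by
    have hn : n ≤ m ^ 2 := by nlinarith
    have hV : (V * n) ^ 2 ≤ m ^ 2 := by gcongr; omega
    nlinarith
  have hmT : m ≤ m ^ (2 * k) := Nat.le_self_pow (by omega) _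
  have hD : 16 * (C + 1) ≤ (16 * (C + 1)) ^ (2 * k) := Nat.le_self_pow (by omega) _
  have hexp : C + m * 9 + C * m ^ (2 * k) ≤ (16 * (C + 1) * (V + 4) * n) ^ (2 * k) :=
    calc C + m * 9 + C * m ^ (2 * k) ≤ 16 * (C + 1) * m ^ (2 * k) := by nlinarith
      _ ≤ (16 * (C + 1)) ^ (2 * k) * m ^ (2 * k) := by gcongr
      _ = (16 * (C + 1) * (V + 4) * n) ^ (2 * k) := by rw [← mul_pow, hm, mul_assoc _ (V + 4)]
  have hself (x : ℕ) : x ≤ 2 ^ x := Nat.lt_two_pow_self.le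
  calc C * (n + 3 * (V * n) ^ 2) ^ 2 * (V * n + 1) ^ 3 * C ^ (V * n + 1) ^ (2 * k)
      ≤ C * (m ^ 3) ^ 2 * m ^ 3 * C ^ m ^ (2 * k) := by
        obtain rfl | hC := C.eq_zero_or_pos
        · simp
        · gcongr
    _ = C * m ^ 9 * C ^ m ^ (2 * k) := by ring
    _ ≤ 2 ^ C * (2 ^ m) ^ 9 * (2 ^ C) ^ m ^ (2 * k) := by gcongr <;> exact hself _
    _ = 2 ^ (C + m * 9 + C * m ^ (2 * k)) := by rw [← pow_mul, ← pow_mul, ← pow_add, ← pow_add]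
    _ ≤ 2 ^ (16 * (C + 1) * (V + 4) * n) ^ (2 * k) := Nat.pow_le_pow_right two_pos hexp

theorem isMetabelian_freeMetabelian (X : Type*) : IsMetabelian (FreeMetabelian X) := by
  intro x y hx hy
  have hbot := map_derivedSeries_eq (QuotientGroup.mk'_surjective (derivedSeries (FreeGroup X) 2)) 2
  rw [QuotientGroup.map_mk'_self] at hbot
  rw [← derivedSeries_one] at hx hy
  have hxy := Subgroup.commutator_mem_commutator hx hy
  rwa [← derivedSeries_succ, ← hbot, Subgroup.mem_bot, commutatorElement_eq_one_iff_mul_comm]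
    at hxy

theorem exists_list_of_mNormLe {X : Type*} {w : FreeMetabelian X} {n : ℕ} (h : mNormLe w n) :
    ∃ l : List (X × Bool), l.length ≤ n ∧
      (l.map fun p => (FreeGroup.mk [p] : FreeMetabelian X)).prod = w := by
  let := Classical.decEq X
  obtain ⟨v, rfl, hv⟩ := h
  have hmk (l : List (X × Bool)) : (l.map fun p => FreeGroup.mk [p]).prod = FreeGroup.mk l := by
    induction l with
    | nil => rfl
    | cons p l ih => rw [List.map_cons, List.prod_cons, ih, FreeGroup.mul_mk, List.singleton_append]
  refine ⟨v.toWord, hv, ?_⟩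
  conv_rhs => rw [← FreeGroup.mk_toWord (x := v), ← hmk, map_list_prod, List.map_map]
  rfl

theorem IsRelDehnFunctionOf.exists_le {X : Type*} [Finite X] {R : Set (FreeMetabelian X)}
    {δ : ℕ → ℕ} (hδ : IsRelDehnFunctionOf R δ) {k : ℕ}
    (hk : k ∈ abelianRankSet (FreeMetabelian X ⧸ Subgroup.normalClosure R)) :
    ∃ C V, ∀ n, δ n ≤ C * (n + 3 * (V * k * n) ^ 2) ^ 2 * (V * k * n + 1) ^ 3 *
      C ^ (V * k * n + 1) ^ (2 * k) := by
  obtain ⟨A, hA, hcomm, hQ, hrank⟩ := hk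
  let : CommGroup ((FreeMetabelian X ⧸ Subgroup.normalClosure R) ⧸ A) := { mul_comm := hQ }
  let q := QuotientGroup.mk' (Subgroup.normalClosure R)
  let π := (QuotientGroup.mk' A).comp q
  have hπ : Surjective π := (QuotientGroup.mk'_surjective A).comp (QuotientGroup.mk'_surjective _)
  have hR : Subgroup.normalClosure R ≤ π.ker :=
    (QuotientGroup.ker_mk' _).symm.trans_le (q.ker_le_comap (QuotientGroup.mk' A).ker)
  have hker : ∀ x ∈ π.ker, ∀ y ∈ π.ker, ⁅x, y⁆ ∈ Subgroup.normalClosure R := by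
    intro x hx y hy
    rw [← QuotientGroup.eq_one_iff, ← QuotientGroup.mk'_apply, map_commutatorElement,
      commutatorElement_eq_one_iff_mul_comm]
    exact hcomm _ _ ((QuotientGroup.eq_one_iff _).1 hx) ((QuotientGroup.eq_one_iff _).1 hy)
  obtain ⟨C, hC, V, harea⟩ := exists_areaLe_list_prod (isMetabelian_freeMetabelian X) hπ hR hker
    hrank fun p : X × Bool => (FreeGroup.mk [p] : FreeMetabelian X)
  refine ⟨C, V, fun n => (hδ n).2 fun w hw hn => ?_⟩
  obtain ⟨l, hl, rfl⟩ := exists_list_of_mNormLe hn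
  exact (harea l hw).mono (by gcongr)

theorem relative_dehn_upper_bound_metabelian_general {X : Type*} [Finite X]
    (R : Set (FreeMetabelian X)) (δ : ℕ → ℕ) (hδ : IsRelDehnFunctionOf R δ)
    (k : ℕ) (hk : k ∈ abelianRankSet (FreeMetabelian X ⧸ Subgroup.normalClosure R)) :
    (k = 0 → Dominates δ fun n => n ^ 2) ∧
    (0 < k → Dominates δ fun n => 2 ^ n ^ (2 * k)) := by
  obtain ⟨C, V, hbound⟩ := hδ.exists_le hk
  constructor
  · rintro rfl
    refine dominates_of_forall_pos_le (Nat.pow_left_strictMono two_ne_zero).monotone (U := C)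
      fun n _ => (hbound n).trans_eq ?_
    simp only [mul_zero, zero_mul, pow_zero, pow_one]
    ring
  · intro hk
    exact dominates_of_forall_pos_le (fun m n hmn => Nat.pow_le_pow_right two_pos (by gcongr))
      fun n hn => (hbound n).trans (area_bound_le_two_pow C (V * k) hk hn)

end DehnFunction

/-- Upper bound for the relative Dehn function (in the variety of
metabelian groups) of a finitely generated metabelian group in terms of the minimal
torsion-free rank `k`. -/
theorem relative_dehn_upper_bound_metabelian {X : Type} [Finite X]
    (R : Set (FreeMetabelian X)) (hR : R.Finite)
    (δ : ℕ → ℕ) (hδ : IsRelDehnFunctionOf R δ)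
    (k : ℕ) (hk : IsLeast (abelianRankSet (FreeMetabelian X ⧸ Subgroup.normalClosure R)) k) :
    (k = 0 → Dominates δ fun n => n ^ 2) ∧
    (0 < k → Dominates δ fun n => 2 ^ n ^ (2 * k)) :=
  relative_dehn_upper_bound_metabelian_general R δ hδ k hk.1
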